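/- arXiv:2204.00071 — 6 statements merged into one kernel-verified Lean document; each statement's English description precedes it below -/
import Mathlib

section
/- Under the structural assumptions on the gas network, a generalized solution of the gas flow problem, if it exists, is unique: if (p, f) and (p̂, f̂) are two generalized solutions for the same data (the same resistances β, boost ratios α, slack pressures p_s, and non-slack injections q), then p(i) = p̂(i) for every node i ∈ V and f(e) = f̂(e) for every edge e ∈ E. -/
/-! Gas network machinery: a finite directed multigraph is given by vertex and edge
types with source map `sV` and target map `tV`; an undirected step is an edge
together with a direction of traversal. -/

/-- The vertex at which an oriented step starts. -/
def stepTail {V E : Type*} (sV tV : E → V) (st : E × Bool) : V :=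
  if st.2 then sV st.1 else tV st.1

/-- The vertex at which an oriented step ends. -/
def stepHead {V E : Type*} (sV tV : E → V) (st : E × Bool) : V :=
  if st.2 then tV st.1 else sV st.1

/-- `IsWalk sV tV a l b`: the list of oriented steps `l` forms an undirected walk
from `a` to `b`. -/
def IsWalk {V E : Type*} (sV tV : E → V) : V → List (E × Bool) → V → Prop
  | a, [], b => a = b
  | a, st :: l, b => stepTail sV tV st = a ∧ IsWalk sV tV (stepHead sV tV st) l b

/-- An undirected path: a walk in which no vertex is repeated. -/
def IsPath {V E : Type*} (sV tV : E → V) (a : V) (l : List (E × Bool)) (b : V) : Prop :=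
  IsWalk sV tV a l b ∧ (a :: l.map (stepHead sV tV)).Nodup

/-- An undirected (simple) cycle based at `a`: a nonempty closed walk with no repeated
edges and no repeated vertices (other than the base point as start and end). -/
def IsCycle {V E : Type*} (sV tV : E → V) (a : V) (l : List (E × Bool)) : Prop :=
  l ≠ [] ∧ IsWalk sV tV a l a ∧ (l.map Prod.fst).Nodup ∧
    (l.map (stepHead sV tV)).Nodup

/-- A generalized solution of the gas flow problem: pressures lie in the domain `D`,
every pipe satisfies the potential-drop equation, every compressor satisfies the
pressure-boost equation, flow balance holds at every non-slack node, and slack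
pressures are attained. -/
def IsGenSol {V E : Type*} [Fintype E] [DecidableEq V]
    (sV tV : E → V) (pipe : E → Prop) (Ns : Set V)
    (β α : E → ℝ) (ps q : V → ℝ)
    (Pot : ℝ → ℝ) (D : Set ℝ) (p : V → ℝ) (f : E → ℝ) : Prop :=
  (∀ i : V, p i ∈ D) ∧
  (∀ e : E, pipe e → Pot (p (sV e)) - Pot (p (tV e)) = β e * f e * |f e|) ∧
  (∀ e : E, ¬ pipe e → p (tV e) = α e * p (sV e)) ∧
  (∀ i : V, i ∉ Ns →
    (∑ e : E, if tV e = i then f e else 0) -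
      (∑ e : E, if sV e = i then f e else 0) = q i) ∧
  (∀ i ∈ Ns, p i = ps i)

theorem aux_mulabs_lt {x y : ℝ} (h : x * |x| < y * |y|) : x < y := by
  by_contra hc
  push Not at hc
  rcases abs_cases x with ⟨h1, h2⟩ | ⟨h1, h2⟩ <;>
  rcases abs_cases y with ⟨h3, h4⟩ | ⟨h3, h4⟩ <;> rw [h1, h3] at h <;> nlinarith

theorem aux_mulabs_inj {x y : ℝ} (h : x * |x| = y * |y|) : x = y := by
  rcases lt_trichotomy x y with hc | hc | hc
  · exfalso
    rcases abs_cases x with ⟨h1, h2⟩ | ⟨h1, h2⟩ <;>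
    rcases abs_cases y with ⟨h3, h4⟩ | ⟨h3, h4⟩ <;> rw [h1, h3] at h <;> nlinarith
  · exact hc
  · exfalso
    rcases abs_cases x with ⟨h1, h2⟩ | ⟨h1, h2⟩ <;>
    rcases abs_cases y with ⟨h3, h4⟩ | ⟨h3, h4⟩ <;> rw [h1, h3] at h <;> nlinarith

theorem aux_walk_invariant {V E : Type*} (sV tV : E → V) (S : V → Prop)
    (h : ∀ e, S (sV e) ↔ S (tV e)) :
    ∀ (l : List (E × Bool)) (a b : V), IsWalk sV tV a l b → (S a ↔ S b) := by
  intro l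
  induction l with
  | nil => intro a b hw; simp only [IsWalk] at hw; rw [hw]
  | cons st l ih =>
    intro a b hw
    obtain ⟨h1, h2⟩ := hw
    rw [← ih _ _ h2, ← h1]
    obtain ⟨e, d⟩ := st
    cases d
    · simpa [stepTail, stepHead] using (h e).symm
    · simpa [stepTail, stepHead] using h e

theorem aux_le {V E : Type*} [Fintype V] [Fintype E] [DecidableEq V]
    (sV tV : E → V) (pipe : E → Prop) (Ns : Set V)
    (β α : E → ℝ) (ps q : V → ℝ) (Pot : ℝ → ℝ) (D : Set ℝ)
    (hmono : ∀ x ∈ D, ∀ y ∈ D, x < y → Pot x < Pot y)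
    (hNs : Ns.Nonempty)
    (hβ : ∀ e, pipe e → 0 < β e)
    (hα : ∀ e, ¬ pipe e → 0 < α e)
    (hconn : ∀ a b : V, ∃ l, IsWalk sV tV a l b)
    (p : V → ℝ) (f : E → ℝ) (p' : V → ℝ) (f' : E → ℝ)
    (hsol : IsGenSol sV tV pipe Ns β α ps q Pot D p f)
    (hsol' : IsGenSol sV tV pipe Ns β α ps q Pot D p' f') (i : V) : p i ≤ p' i := by
  classical
  obtain ⟨hD, hp, hc, hq, hs⟩ := hsol
  obtain ⟨hD', hp', hc', hq', hs'⟩ := hsol'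
  have hmono' : ∀ x ∈ D, ∀ y ∈ D, x ≤ y → Pot x ≤ Pot y := by
    intro x hx y hy hxy
    rcases hxy.lt_or_eq with h | h
    · exact (hmono x hx y hy h).le
    · rw [h]
  have hcomp : ∀ e, ¬ pipe e → (p' (sV e) < p (sV e) ↔ p' (tV e) < p (tV e)) := by
    intro e he
    rw [hc e he, hc' e he]
    exact (mul_lt_mul_iff_right₀ (hα e he)).symm
  have hout : ∀ e, p' (sV e) < p (sV e) → ¬ p' (tV e) < p (tV e) → f' e < f e := by
    intro e h1 h2
    by_cases he : pipe e
    · have a1 := hmono _ (hD' _) _ (hD _) h1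
      have a2 := hmono' _ (hD _) _ (hD' _) (not_lt.1 h2)
      have a3 := hp e he
      have a4 := hp' e he
      apply aux_mulabs_lt
      have : β e * (f' e * |f' e|) < β e * (f e * |f e|) := by
        rw [← mul_assoc, ← mul_assoc]; linarith
      exact lt_of_mul_lt_mul_left this (hβ e he).le
    · exact absurd ((hcomp e he).1 h1) h2
  have hin : ∀ e, ¬ p' (sV e) < p (sV e) → p' (tV e) < p (tV e) → f e < f' e := by
    intro e h2 h1
    by_cases he : pipe e
    · have a1 := hmono _ (hD' _) _ (hD _) h1
      have a2 := hmono' _ (hD _) _ (hD' _) (not_lt.1 h2)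
      have a3 := hp e he
      have a4 := hp' e he
      apply aux_mulabs_lt
      have : β e * (f e * |f e|) < β e * (f' e * |f' e|) := by
        rw [← mul_assoc, ← mul_assoc]; linarith
      exact lt_of_mul_lt_mul_left this (hβ e he).le
    · exact absurd ((hcomp e he).2 h1) h2
  let T : Finset V := Finset.univ.filter (fun i => p' i < p i)
  have hT : ∀ i, i ∈ T ↔ p' i < p i := by intro i; simp [T]
  have hbal : ∀ i ∈ T, (∑ e : E, ((if tV e = i then (f e - f' e) else 0) -
      (if sV e = i then (f e - f' e) else 0))) = 0 := by
    intro i hi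
    have hiN : i ∉ Ns := by
      intro h
      have := (hT i).1 hi
      rw [hs i h, hs' i h] at this
      exact lt_irrefl _ this
    have b1 := hq i hiN
    have b2 := hq' i hiN
    have : (∑ e : E, ((if tV e = i then (f e - f' e) else 0) -
      (if sV e = i then (f e - f' e) else 0))) =
      ((∑ e : E, if tV e = i then f e else 0) -
      (∑ e : E, if sV e = i then f e else 0)) - ((∑ e : E, if tV e = i then f' e else 0) -
      (∑ e : E, if sV e = i then f' e else 0)) := by
      rw [← Finset.sum_sub_distrib, ← Finset.sum_sub_distrib, ← Finset.sum_sub_distrib]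
      apply Finset.sum_congr rfl
      intro e _
      split_ifs <;> ring
    rw [this, b1, b2, sub_self]
  have hsum := Finset.sum_eq_zero hbal
  rw [Finset.sum_comm] at hsum
  simp only [Finset.sum_sub_distrib, Finset.sum_ite_eq] at hsum
  rw [← Finset.sum_sub_distrib] at hsum
  have hle : ∀ e ∈ (Finset.univ : Finset E), ((if tV e ∈ T then f e - f' e else 0) -
      (if sV e ∈ T then f e - f' e else 0)) ≤ 0 := by
    intro e _
    have h1 := hout e
    have h2 := hin e
    rw [← hT, ← hT] at h1 h2
    split_ifs with h3 h4 h4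
    · simp
    · linarith [h2 h4 h3]
    · linarith [h1 h4 h3]
    · simp
  have hz := (Finset.sum_eq_zero_iff_of_nonpos hle).1 hsum
  have hinv : ∀ e, (sV e ∈ T) ↔ (tV e ∈ T) := by
    intro e
    have h1 := hout e
    have h2 := hin e
    rw [← hT, ← hT] at h1 h2
    have h0 := hz e (Finset.mem_univ e)
    split_ifs at h0 with h3 h4 h4
    · simp [h3, h4]
    · linarith [h2 h4 h3]
    · linarith [h1 h4 h3]
    · simp [h3, h4]
  by_contra hcon
  obtain ⟨s, hsN⟩ := hNs
  obtain ⟨l, hl⟩ := hconn i s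
  have := (hT s).1 ((aux_walk_invariant sV tV (· ∈ T) hinv l i s hl).1
    ((hT i).2 (not_le.1 hcon)))
  rw [hs s hsN, hs' s hsN] at this
  exact lt_irrefl _ this

theorem aux_tail_mem {V E : Type*} (sV tV : E → V) :
    ∀ (l : List (E × Bool)) (a b : V), IsWalk sV tV a l b → ∀ s ∈ l,
      stepTail sV tV s ∈ a :: l.map (stepHead sV tV) := by
  intro l
  induction l with
  | nil => intro a b _ s hs; simp at hs
  | cons st l ih =>
    intro a b hw s hs
    rcases List.mem_cons.1 hs with h | h
    · rw [h, hw.1]; simp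
    · exact List.mem_cons_of_mem _ (ih _ _ hw.2 s h)

/-- On a path, the first vertex is not incident with any step but the first. -/
theorem aux_first_not_incident {V E : Type*} (sV tV : E → V)
    (st : E × Bool) (l : List (E × Bool)) (a b : V) (h : IsPath sV tV a (st :: l) b)
    (s : E × Bool) (hs : s ∈ l) : sV s.1 ≠ a ∧ tV s.1 ≠ a := by
  obtain ⟨hw, hn⟩ := h
  have hnot := (List.nodup_cons.1 hn).1
  have h1 : stepTail sV tV s ≠ a := by
    intro hh
    apply hnot
    rw [← hh]
    exact aux_tail_mem sV tV l _ b hw.2 s hs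
  have h2 : stepHead sV tV s ≠ a := by
    intro hh
    apply hnot
    rw [← hh]
    exact List.mem_cons_of_mem _ (List.mem_map_of_mem hs)
  obtain ⟨e, d⟩ := s
  cases d
  · simp [stepTail, stepHead] at h1 h2 ⊢; exact ⟨h2, h1⟩
  · simp [stepTail, stepHead] at h1 h2 ⊢; exact ⟨h1, h2⟩

theorem aux_path_edges_nodup {V E : Type*} (sV tV : E → V) :
    ∀ (l : List (E × Bool)) (a b : V), IsPath sV tV a l b → (l.map Prod.fst).Nodup := by
  intro l
  induction l with
  | nil => intro a b _; simp
  | cons st l ih =>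
    intro a b h
    rw [List.map_cons, List.nodup_cons]
    refine ⟨?_, ih _ b ⟨h.1.2, (List.nodup_cons.1 h.2).2⟩⟩
    intro hm
    obtain ⟨s, hs, hse⟩ := List.mem_map.1 hm
    have := aux_first_not_incident sV tV st l a b h s hs
    rw [hse] at this
    have h1 := h.1.1
    unfold stepTail at h1
    split_ifs at h1
    · exact this.1 h1
    · exact this.2 h1

theorem aux_initial_part {V E : Type*} (sV tV : E → V) :
    ∀ (l : List (E × Bool)) (a b c : V), IsWalk sV tV a l b →
      c ∈ l.map (stepHead sV tV) → ∃ l1 l2, l = l1 ++ l2 ∧ IsWalk sV tV a l1 c := by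
  intro l
  induction l with
  | nil => intro a b c _ h; simp at h
  | cons st l ih =>
    intro a b c hw h
    rw [List.map_cons, List.mem_cons] at h
    rcases h with h | h
    · exact ⟨[st], l, rfl, hw.1, h.symm⟩
    · obtain ⟨l1, l2, h1, h2⟩ := ih _ b c hw.2 h
      exact ⟨st :: l1, l2, by rw [h1]; rfl, hw.1, h2⟩

theorem aux_extend {V E : Type*} [Fintype V] (sV tV : E → V) (Ns : Set V) (Q : E → Prop)
    (hcyc : ∀ a l, IsCycle sV tV a l → ¬ ∀ s ∈ l, Q s.1)
    (hdeg : ∀ a, a ∉ Ns → ∀ e, Q e → (sV e = a ∨ tV e = a) →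
      ∃ e', e' ≠ e ∧ Q e' ∧ (sV e' = a ∨ tV e' = a)) :
    ∀ (n : ℕ) (a : V) (st : E × Bool) (l : List (E × Bool)) (b : V),
      IsPath sV tV a (st :: l) b → (∀ s ∈ st :: l, Q s.1) → Fintype.card V < n + l.length →
      ∃ a' ∈ Ns, ∃ st' l', IsPath sV tV a' (st' :: l') b ∧ ∀ s ∈ st' :: l', Q s.1 := by
  intro n
  induction n with
  | zero =>
    intro a st l b hp _ hlen
    have := hp.2.length_le_card
    simp at this hlen
    omega
  | succ n ih =>
    intro a st l b hp hQ hlen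
    by_cases ha : a ∈ Ns
    · exact ⟨a, ha, st, l, hp, hQ⟩
    have hinc : sV st.1 = a ∨ tV st.1 = a := by
      have h1 := hp.1.1
      unfold stepTail at h1
      split_ifs at h1
      · exact Or.inl h1
      · exact Or.inr h1
    obtain ⟨e', hne, hQe, hinc'⟩ := hdeg a ha st.1 (hQ st (by simp)) hinc
    obtain ⟨s', hs'e, hs'h⟩ : ∃ s' : E × Bool, s'.1 = e' ∧ stepHead sV tV s' = a := by
      rcases hinc' with h | h
      · exact ⟨(e', false), rfl, by simpa [stepHead] using h⟩
      · exact ⟨(e', true), rfl, by simpa [stepHead] using h⟩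
    by_cases hc : stepTail sV tV s' ∈ a :: (st :: l).map (stepHead sV tV)
    · exfalso
      rcases List.mem_cons.1 hc with hc | hc
      · refine hcyc a [s'] ⟨by simp, ⟨hc, hs'h⟩, by simp, by simp⟩ ?_
        simpa [hs'e] using hQe
      · obtain ⟨l1, l2, h1, h2⟩ := aux_initial_part sV tV _ a b _ hp.1 hc
        have hsub : l1.Sublist (st :: l) := by rw [h1]; exact List.sublist_append_left _ _
        refine hcyc (stepTail sV tV s') (s' :: l1) ⟨by simp, ⟨rfl, by rw [hs'h]; exact h2⟩, ?_, ?_⟩ ?_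
        · rw [List.map_cons, List.nodup_cons]
          refine ⟨?_, (aux_path_edges_nodup sV tV _ a b hp).sublist (hsub.map _)⟩
          intro hm
          obtain ⟨s, hs, hse⟩ := List.mem_map.1 hm
          rw [hs'e] at hse
          rcases List.mem_cons.1 (hsub.subset hs) with h | h
          · rw [h] at hse; exact hne hse.symm
          · have := aux_first_not_incident sV tV st l a b hp s h
            rw [hse] at this
            rcases hinc' with h | h
            · exact this.1 h
            · exact this.2 h
        · rw [List.map_cons, hs'h]
          exact hp.2.sublist ((hsub.map _).cons_cons _)
        · intro s hs
          rcases List.mem_cons.1 hs with h | h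
          · rw [h, hs'e]; exact hQe
          · exact hQ s (hsub.subset h)
    · refine ih (stepTail sV tV s') s' (st :: l) b ⟨⟨rfl, by rw [hs'h]; exact hp.1⟩, ?_⟩ ?_ ?_
      · rw [List.map_cons, hs'h]
        exact List.nodup_cons.2 ⟨hc, hp.2⟩
      · intro s hs
        rcases List.mem_cons.1 hs with h | h
        · rw [h, hs'e]; exact hQe
        · exact hQ s h
      · simp only [List.length_cons]; omega


/-- Uniqueness of generalized solutions to the gas flow problem: on a connected gas
network in which every path joining two distinct slack nodes contains a pipe and every
cycle contains a pipe, with positive pipe resistances, positive compressor boost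
ratios, a nonempty set of slack nodes, and a potential `Pot` strictly increasing on
the pressure domain `D`, any two generalized solutions for the same data coincide. -/
theorem generalized_solution_unique
    {V E : Type*} [Fintype V] [Fintype E] [DecidableEq V] [DecidableEq E]
    (sV tV : E → V) (pipe : E → Prop) (Ns : Set V)
    (β α : E → ℝ) (ps q : V → ℝ) (Pot : ℝ → ℝ) (D : Set ℝ)
    (hmono : ∀ x ∈ D, ∀ y ∈ D, x < y → Pot x < Pot y)
    (hNs : Ns.Nonempty)
    (hβ : ∀ e, pipe e → 0 < β e)
    (hα : ∀ e, ¬ pipe e → 0 < α e)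
    (hconn : ∀ a b : V, ∃ l, IsWalk sV tV a l b)
    (hslackpath : ∀ a ∈ Ns, ∀ b ∈ Ns, a ≠ b →
      ∀ l, IsPath sV tV a l b → ∃ st ∈ l, pipe st.1)
    (hcyclepipe : ∀ (a : V) (l : List (E × Bool)),
      IsCycle sV tV a l → ∃ st ∈ l, pipe st.1)
    (p f p' f')
    (hsol : IsGenSol sV tV pipe Ns β α ps q Pot D p f)
    (hsol' : IsGenSol sV tV pipe Ns β α ps q Pot D p' f') :
    p = p' ∧ f = f' := by
  have hpp : p = p' := funext fun i => le_antisymm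
    (aux_le sV tV pipe Ns β α ps q Pot D hmono hNs hβ hα hconn p f p' f' hsol hsol' i)
    (aux_le sV tV pipe Ns β α ps q Pot D hmono hNs hβ hα hconn p' f' p f hsol' hsol i)
  refine ⟨hpp, ?_⟩
  subst hpp
  obtain ⟨-, hp, -, hq, -⟩ := hsol
  obtain ⟨-, hp', -, hq', -⟩ := hsol'
  have hpipe : ∀ e, f e ≠ f' e → ¬ pipe e := by
    intro e hne he
    apply hne
    apply aux_mulabs_inj
    have h := (hp e he).symm.trans (hp' e he)
    rw [mul_assoc, mul_assoc] at h
    exact mul_left_cancel₀ (hβ e he).ne' h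
  have hcyc : ∀ a l, IsCycle sV tV a l → ¬ ∀ s ∈ l, f s.1 ≠ f' s.1 := by
    intro a l hl hall
    obtain ⟨st, hst, hpst⟩ := hcyclepipe a l hl
    exact hpipe _ (hall st hst) hpst
  have hloop : ∀ e, f e ≠ f' e → sV e ≠ tV e := by
    intro e he heq
    refine hcyc (sV e) [(e, true)] ⟨by simp, ⟨rfl, ?_⟩, by simp, by simp⟩ (by simpa using he)
    simpa [stepHead, IsWalk] using heq.symm
  have hdeg : ∀ a, a ∉ Ns → ∀ e, f e ≠ f' e → (sV e = a ∨ tV e = a) →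
      ∃ e', e' ≠ e ∧ f e' ≠ f' e' ∧ (sV e' = a ∨ tV e' = a) := by
    intro a ha e he hinc
    by_contra hcon
    push Not at hcon
    have hsum : (∑ e : E, ((if tV e = a then (f e - f' e) else 0) -
      (if sV e = a then (f e - f' e) else 0))) = 0 := by
      have : (∑ e : E, ((if tV e = a then (f e - f' e) else 0) -
        (if sV e = a then (f e - f' e) else 0))) =
        ((∑ e : E, if tV e = a then f e else 0) -
        (∑ e : E, if sV e = a then f e else 0)) - ((∑ e : E, if tV e = a then f' e else 0) -
        (∑ e : E, if sV e = a then f' e else 0)) := by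
        rw [← Finset.sum_sub_distrib, ← Finset.sum_sub_distrib, ← Finset.sum_sub_distrib]
        apply Finset.sum_congr rfl
        intro e _
        split_ifs <;> ring
      rw [this, hq a ha, hq' a ha, sub_self]
    rw [Finset.sum_eq_single e] at hsum
    · have hl := hloop e he
      have hg := sub_ne_zero.2 he
      rcases hinc with h | h
      · have h2 : tV e ≠ a := fun h3 => hl (h.trans h3.symm)
        rw [if_neg h2, if_pos h, zero_sub, neg_eq_zero] at hsum
        exact hg hsum
      · have h2 : sV e ≠ a := fun h3 => hl (h3.trans h.symm)
        rw [if_neg h2, if_pos h, sub_zero] at hsum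
        exact hg hsum
    · intro e' _ hne
      by_cases hf : f e' = f' e'
      · simp [hf]
      · obtain ⟨h1, h2⟩ := hcon e' hne hf
        simp [h1, h2]
    · intro h; exact absurd (Finset.mem_univ e) h
  have hext := aux_extend sV tV Ns (fun e => f e ≠ f' e) hcyc hdeg (Fintype.card V + 1)
  -- no slack node is incident with an edge on which the flows differ
  have hslack : ∀ s : E × Bool, f s.1 ≠ f' s.1 → stepHead sV tV s ∉ Ns := by
    intro s hs hb
    have hl : stepTail sV tV s ≠ stepHead sV tV s := by
      have := hloop s.1 hs
      unfold stepTail stepHead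
      split_ifs
      · exact this
      · exact this.symm
    obtain ⟨a', ha', st', l', hP, hQ⟩ := hext (stepTail sV tV s) s [] (stepHead sV tV s)
      ⟨⟨rfl, rfl⟩, by simpa using hl⟩ (by simpa using hs) (by simp)
    have hne : a' ≠ stepHead sV tV s := by
      intro h
      have hend : ∀ (l : List (E × Bool)) (x y : V), IsWalk sV tV x l y →
          y ∈ x :: l.map (stepHead sV tV) := by
        intro l
        induction l with
        | nil => intro x y hw; simp only [IsWalk] at hw; simp [hw]
        | cons st l ih => intro x y hw; exact List.mem_cons_of_mem _ (ih _ _ hw.2)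
      have := hend l' _ _ hP.1.2
      rw [← h] at this
      exact (List.nodup_cons.1 hP.2).1 this
    obtain ⟨t, ht, hpt⟩ := hslackpath a' ha' _ hb hne _ hP
    exact hpipe _ (hQ t ht) hpt
  funext e
  by_contra he
  obtain ⟨a', ha', st', l', hP, hQ⟩ := hext (sV e) (e, true) [] (tV e)
    ⟨⟨rfl, rfl⟩, by simpa [stepHead] using hloop e he⟩ (by simpa using he) (by simp)
  have h1 := hP.1.1
  have h2 := hslack (st'.1, !st'.2) (hQ st' (by simp))
  apply h2
  have : stepHead sV tV (st'.1, !st'.2) = stepTail sV tV st' := by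
    obtain ⟨e', d⟩ := st'
    cases d <;> simp [stepHead, stepTail]
  rw [this, h1]
  exact ha'
end

section
/- Under the structural assumptions on the gas network, the injections at the slack nodes are uniquely determined by the data: if (p, f) and (p̂, f̂) are two generalized solutions for the same data (the same resistances β, boost ratios α, slack pressures p_s, and non-slack injections q), then for every slack node i ∈ N_s, the net outflow ∑_{e : s(e)=i} f(e) − ∑_{e : t(e)=i} f(e) equals the net outflow ∑_{e : s(e)=i} f̂(e) − ∑_{e : t(e)=i} f̂(e). -/
theorem sqabs_mono {x y : ℝ} (h : y ≤ x) : y * |y| ≤ x * |x| := by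
  rcases abs_cases x with ⟨hx, hx'⟩ | ⟨hx, hx'⟩ <;> rcases abs_cases y with ⟨hy, hy'⟩ | ⟨hy, hy'⟩ <;>
    rw [hx, hy] <;> nlinarith

theorem lt_of_sqabs_lt {x y b : ℝ} (hb : 0 < b) (h : b * x * |x| < b * y * |y|) : x < y := by
  by_contra hc
  have := mul_le_mul_of_nonneg_left (sqabs_mono (not_lt.mp hc)) hb.le
  nlinarith

theorem eq_of_sqabs_eq {x y b : ℝ} (hb : 0 < b) (h : b * x * |x| = b * y * |y|) : x = y := by
  have key : ∀ u v : ℝ, u < v → u * |u| < v * |v| := by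
    intro u v huv
    rcases abs_cases u with ⟨hx, hx'⟩ | ⟨hx, hx'⟩ <;>
      rcases abs_cases v with ⟨hy, hy'⟩ | ⟨hy, hy'⟩ <;> rw [hx, hy] <;> nlinarith
  have h' : x * |x| = y * |y| := by
    apply mul_left_cancel₀ hb.ne'
    linarith
  rcases lt_trichotomy x y with hc | hc | hc
  · have := key _ _ hc
    linarith
  · exact hc
  · have := key _ _ hc
    linarith

/-- Net outflow of a flow at a node. -/
def netOut {V E : Type*} [Fintype E] [DecidableEq V] (sV tV : E → V) (g : E → ℝ) (i : V) : ℝ :=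
  (∑ e : E, if sV e = i then g e else 0) - (∑ e : E, if tV e = i then g e else 0)

theorem netOut_sub {V E : Type*} [Fintype E] [DecidableEq V] (sV tV : E → V) (f f' : E → ℝ)
    (i : V) : netOut sV tV (fun e => f e - f' e) i = netOut sV tV f i - netOut sV tV f' i := by
  have h : ∀ r : E → V, (∑ e : E, if r e = i then f e - f' e else 0) =
      (∑ e : E, if r e = i then f e else 0) - (∑ e : E, if r e = i then f' e else 0) := by
    intro r
    rw [← Finset.sum_sub_distrib]
    refine Finset.sum_congr rfl fun e _ => ?_
    split_ifs <;> simp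
  simp only [netOut, h]
  ring

theorem sum_netOut {V E : Type*} [Fintype E] [DecidableEq V] (sV tV : E → V) (g : E → ℝ)
    (S : Finset V) : ∑ i ∈ S, netOut sV tV g i =
      ∑ e : E, ((if sV e ∈ S then g e else 0) - (if tV e ∈ S then g e else 0)) := by
  simp only [netOut, Finset.sum_sub_distrib]
  congr 1
  · rw [Finset.sum_comm]
    simp
  · rw [Finset.sum_comm]
    simp

theorem walk_closed {V E : Type*} (sV tV : E → V) (S : V → Prop)
    (h : ∀ e, S (sV e) ↔ S (tV e)) (b : V) :
    ∀ (l : List (E × Bool)) (a : V), IsWalk sV tV a l b → S a → S b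
  | [], a, hw, ha => by
    have : a = b := hw
    exact this ▸ ha
  | (e, d) :: l, a, hw, ha => by
    obtain ⟨h1, h2⟩ := hw
    refine walk_closed sV tV S h b l _ h2 ?_
    subst h1
    cases d
    · exact (h e).2 ha
    · exact (h e).1 ha

theorem path_suffix {V E : Type*} (sV tV : E → V) (a b : V) :
    ∀ (l : List (E × Bool)) (c : V), IsPath sV tV c l b → a ∈ c :: l.map (stepHead sV tV) →
      ∃ l', IsPath sV tV a l' b ∧ ∀ st ∈ l', st ∈ l
  | [], c, hp, ha => by
    have : a = c := by simpa using ha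
    subst this
    exact ⟨[], hp, fun _ h => h⟩
  | st :: l, c, hp, ha => by
    by_cases hac : a = c
    · subst hac
      exact ⟨_, hp, fun _ h => h⟩
    · obtain ⟨⟨h1, h2⟩, h3⟩ := hp
      have ha' : a ∈ stepHead sV tV st :: l.map (stepHead sV tV) := by
        rcases List.mem_cons.1 ha with h | h
        · exact absurd h hac
        · simpa using h
      obtain ⟨l', hl', hs⟩ := path_suffix sV tV a b l (stepHead sV tV st)
        ⟨h2, by simpa using (List.nodup_cons.1 h3).2⟩ ha'
      exact ⟨l', hl', fun x hx => List.mem_cons_of_mem _ (hs x hx)⟩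

theorem walk_to_path {V E : Type*} (sV tV : E → V) (b : V) :
    ∀ (l : List (E × Bool)) (a : V), IsWalk sV tV a l b →
      ∃ l', IsPath sV tV a l' b ∧ ∀ st ∈ l', st ∈ l
  | [], a, hw => ⟨[], ⟨hw, by simp⟩, fun _ h => h⟩
  | st :: l, a, hw => by
    obtain ⟨h1, h2⟩ := hw
    obtain ⟨l', hl', hs⟩ := walk_to_path sV tV b l _ h2
    by_cases ha : a ∈ stepHead sV tV st :: l'.map (stepHead sV tV)
    · obtain ⟨l'', hl'', hs''⟩ := path_suffix sV tV a b l' _ hl' ha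
      exact ⟨l'', hl'', fun x hx => List.mem_cons_of_mem _ (hs x (hs'' x hx))⟩
    · refine ⟨st :: l', ⟨⟨h1, hl'.1⟩, ?_⟩, ?_⟩
      · rw [List.map_cons]
        exact List.nodup_cons.2 ⟨ha, hl'.2⟩
      · intro x hx
        rcases List.mem_cons.1 hx with h | h
        · simp [h]
        · exact List.mem_cons_of_mem _ (hs x h)

theorem netOut_diff_zero {V E : Type*} [Fintype E] [DecidableEq V]
    {sV tV : E → V} {pipe : E → Prop} {Ns : Set V}
    {β α : E → ℝ} {ps q : V → ℝ} {Pot : ℝ → ℝ} {D : Set ℝ} {p f p' f'}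
    (hsol : IsGenSol sV tV pipe Ns β α ps q Pot D p f)
    (hsol' : IsGenSol sV tV pipe Ns β α ps q Pot D p' f') (i : V) (hi : i ∉ Ns) :
    netOut sV tV (fun e => f e - f' e) i = 0 := by
  rw [netOut_sub]
  have h1 := hsol.2.2.2.1 i hi
  have h2 := hsol'.2.2.2.1 i hi
  simp only [netOut]
  linarith

theorem pressure_le {V E : Type*} [Fintype V] [Fintype E] [DecidableEq V]
    {sV tV : E → V} {pipe : E → Prop} {Ns : Set V}
    {β α : E → ℝ} {ps q : V → ℝ} {Pot : ℝ → ℝ} {D : Set ℝ}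
    (hmono : ∀ x ∈ D, ∀ y ∈ D, x < y → Pot x < Pot y)
    (hNs : Ns.Nonempty)
    (hβ : ∀ e, pipe e → 0 < β e)
    (hα : ∀ e, ¬ pipe e → 0 < α e)
    (hconn : ∀ a b : V, ∃ l, IsWalk sV tV a l b) {p f p' f'}
    (hsol : IsGenSol sV tV pipe Ns β α ps q Pot D p f)
    (hsol' : IsGenSol sV tV pipe Ns β α ps q Pot D p' f') (v : V) : p v ≤ p' v := by
  classical
  by_contra hv
  rw [not_le] at hv
  have hle : ∀ x ∈ D, ∀ y ∈ D, x ≤ y → Pot x ≤ Pot y := by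
    intro x hx y hy hxy
    rcases hxy.eq_or_lt with h | h
    · rw [h]
    · exact (hmono x hx y hy h).le
  have hcomp : ∀ e, ¬ pipe e → (p' (sV e) < p (sV e) ↔ p' (tV e) < p (tV e)) := by
    intro e he
    rw [hsol.2.2.1 e he, hsol'.2.2.1 e he]
    exact (mul_lt_mul_iff_right₀ (hα e he)).symm
  have hout : ∀ e, p' (sV e) < p (sV e) → ¬ p' (tV e) < p (tV e) → 0 < f e - f' e := by
    intro e h1 h2
    by_cases he : pipe e
    · have a1 := hmono _ (hsol'.1 _) _ (hsol.1 _) h1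
      have a2 := hle _ (hsol.1 _) _ (hsol'.1 _) (not_lt.1 h2)
      have := hsol.2.1 e he
      have := hsol'.2.1 e he
      exact sub_pos.2 (lt_of_sqabs_lt (hβ e he) (by linarith))
    · exact absurd ((hcomp e he).1 h1) h2
  have hin : ∀ e, ¬ p' (sV e) < p (sV e) → p' (tV e) < p (tV e) → f e - f' e < 0 := by
    intro e h1 h2
    by_cases he : pipe e
    · have a1 := hmono _ (hsol'.1 _) _ (hsol.1 _) h2
      have a2 := hle _ (hsol.1 _) _ (hsol'.1 _) (not_lt.1 h1)
      have := hsol.2.1 e he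
      have := hsol'.2.1 e he
      exact sub_neg.2 (lt_of_sqabs_lt (hβ e he) (by linarith))
    · exact absurd ((hcomp e he).2 h2) h1
  have hsum := sum_netOut sV tV (fun e => f e - f' e) (Finset.univ.filter fun i => p' i < p i)
  rw [Finset.sum_eq_zero] at hsum
  · have hz := (Finset.sum_eq_zero_iff_of_nonneg (s := (Finset.univ : Finset E)) (by
      intro e _
      simp only [Finset.mem_filter, Finset.mem_univ, true_and]
      by_cases h1 : p' (sV e) < p (sV e) <;> by_cases h2 : p' (tV e) < p (tV e)
      · simp [h1, h2]
      · have := hout e h1 h2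
        simp only [h1, h2, if_true, if_false]
        linarith
      · have := hin e h1 h2
        simp only [h1, h2, if_true, if_false]
        linarith
      · simp [h1, h2])).1 hsum.symm
    obtain ⟨s, hs⟩ := hNs
    obtain ⟨l, hl⟩ := hconn v s
    have : p' s < p s := by
      refine walk_closed sV tV (fun i => p' i < p i) ?_ s l v hl hv
      intro e
      have hze := hz e (Finset.mem_univ _)
      simp only [Finset.mem_filter, Finset.mem_univ, true_and] at hze
      by_cases h1 : p' (sV e) < p (sV e) <;> by_cases h2 : p' (tV e) < p (tV e)
      · simp [h1, h2]
      · have := hout e h1 h2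
        simp only [h1, h2, if_true, if_false] at hze
        linarith
      · have := hin e h1 h2
        simp only [h1, h2, if_true, if_false] at hze
        linarith
      · simp [h1, h2]
    rw [hsol.2.2.2.2 s hs, hsol'.2.2.2.2 s hs] at this
    exact lt_irrefl _ this
  · intro i hi
    refine netOut_diff_zero hsol hsol' i fun hiN => ?_
    have := (Finset.mem_filter.1 hi).2
    rw [hsol.2.2.2.2 i hiN, hsol'.2.2.2.2 i hiN] at this
    exact lt_irrefl _ this

/-- Uniqueness of generalized solutions to the gas flow problem: on a connected gas
network in which every path joining two distinct slack nodes contains a pipe and every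
cycle contains a pipe, with positive pipe resistances, positive compressor boost
ratios, a nonempty set of slack nodes, and a potential `Pot` strictly increasing on
the pressure domain `D`, the net outflow at each slack node (i.e. the slack-node
injection) is the same for any two generalized solutions of the same data. -/
theorem slack_injections_unique
    {V E : Type*} [Fintype V] [Fintype E] [DecidableEq V] [DecidableEq E]
    (sV tV : E → V) (pipe : E → Prop) (Ns : Set V)
    (β α : E → ℝ) (ps q : V → ℝ) (Pot : ℝ → ℝ) (D : Set ℝ)
    (hmono : ∀ x ∈ D, ∀ y ∈ D, x < y → Pot x < Pot y)
    (hNs : Ns.Nonempty)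
    (hβ : ∀ e, pipe e → 0 < β e)
    (hα : ∀ e, ¬ pipe e → 0 < α e)
    (hconn : ∀ a b : V, ∃ l, IsWalk sV tV a l b)
    (hslackpath : ∀ a ∈ Ns, ∀ b ∈ Ns, a ≠ b →
      ∀ l, IsPath sV tV a l b → ∃ st ∈ l, pipe st.1)
    (hcyclepipe : ∀ (a : V) (l : List (E × Bool)),
      IsCycle sV tV a l → ∃ st ∈ l, pipe st.1)
    (p f p' f')
    (hsol : IsGenSol sV tV pipe Ns β α ps q Pot D p f)
    (hsol' : IsGenSol sV tV pipe Ns β α ps q Pot D p' f') :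
    ∀ i ∈ Ns,
      (∑ e : E, if sV e = i then f e else 0) -
        (∑ e : E, if tV e = i then f e else 0) =
      (∑ e : E, if sV e = i then f' e else 0) -
        (∑ e : E, if tV e = i then f' e else 0) := by
  classical
  have hp : p = p' := funext fun v => le_antisymm
    (pressure_le hmono hNs hβ hα hconn hsol hsol' v)
    (pressure_le hmono hNs hβ hα hconn hsol' hsol v)
  have hf : ∀ e, pipe e → f e - f' e = 0 := by
    intro e he
    have h1 := hsol.2.1 e he
    have h2 := hsol'.2.1 e he
    rw [← hp] at h2
    exact sub_eq_zero.2 (eq_of_sqabs_eq (hβ e he) (h1.symm.trans h2))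
  intro i hi
  let R : V → Prop := fun v => ∃ l, IsWalk sV tV v l i ∧ ∀ st ∈ l, ¬ pipe st.1
  have hR : ∀ e, ¬ pipe e → (R (sV e) ↔ R (tV e)) := by
    intro e he
    constructor
    · rintro ⟨l, hl, hn⟩
      refine ⟨(e, false) :: l, ⟨rfl, hl⟩, ?_⟩
      intro st hst
      rcases List.mem_cons.1 hst with h | h
      · rw [h]
        exact he
      · exact hn st h
    · rintro ⟨l, hl, hn⟩
      refine ⟨(e, true) :: l, ⟨rfl, hl⟩, ?_⟩
      intro st hst
      rcases List.mem_cons.1 hst with h | h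
      · rw [h]
        exact he
      · exact hn st h
  have hRi : R i := ⟨[], rfl, by simp⟩
  have hsum := sum_netOut sV tV (fun e => f e - f' e) (Finset.univ.filter R)
  rw [Finset.sum_eq_single_of_mem i (by simpa using hRi)] at hsum
  · rw [Finset.sum_eq_zero] at hsum
    · rw [netOut_sub] at hsum
      exact sub_eq_zero.1 hsum
    · intro e _
      by_cases he : pipe e
      · simp [hf e he]
      · simp [hR e he]
  · intro v hv hvi
    refine netOut_diff_zero hsol hsol' v fun hvN => ?_
    obtain ⟨l, hl, hn⟩ := (Finset.mem_filter.1 hv).2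
    obtain ⟨l', hl', hs⟩ := walk_to_path sV tV i l v hl
    obtain ⟨st, hst, hpipe⟩ := hslackpath v hvN i hi hvi l' hl'
    exact hn st (hs st hst) hpipe
end

section
/- Consider a path of k ≥ 1 edges between two nodes with fixed end pressures, containing at least one pipe. Let Π : ℝ → ℝ be strictly increasing on a set 𝒫 ⊆ ℝ. Let p_0, p_1, …, p_k ∈ 𝒫 and p̂_0, p̂_1, …, p̂_k ∈ 𝒫 be two pressure profiles along the path with the same endpoints, p_0 = p̂_0 and p_k = p̂_k. Suppose each index i ∈ {1, …, k} is designated either a pipe, in which case there are β_i > 0 and flows f_i, f̂_i ∈ ℝ with Π(p_{i−1}) − Π(p_i) = β_i·f_i·|f_i| and Π(p̂_{i−1}) − Π(p̂_i) = β_i·f̂_i·|f̂_i|, or a compressor, in which case there is α_i > 0 with p_i = α_i·p_{i−1} and p̂_i = α_i·p̂_{i−1}. If at least one index is a pipe, then it is not possible that f_i > f̂_i for every pipe index i, and likewise it is not possible that f_i < f̂_i for every pipe index i. -/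
theorem mul_abs_lt_aux {a b : ℝ} (h : a < b) : a * |a| < b * |b| := by
  rcases abs_cases a with ⟨h1, h2⟩ | ⟨h1, h2⟩ <;> rcases abs_cases b with ⟨h3, h4⟩ | ⟨h3, h4⟩ <;>
    rw [h1, h3] <;> nlinarith

theorem path_aux
    (k : ℕ)
    (Pot : ℝ → ℝ) (D : Set ℝ)
    (hmono : ∀ x ∈ D, ∀ y ∈ D, x < y → Pot x < Pot y)
    (isPipe : ℕ → Prop)
    (p p' β f f' α : ℕ → ℝ)
    (hpD : ∀ i ≤ k, p i ∈ D) (hp'D : ∀ i ≤ k, p' i ∈ D)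
    (hstart : p 0 = p' 0) (hend : p k = p' k)
    (hpipe : ∀ i, 1 ≤ i → i ≤ k → isPipe i →
      0 < β i ∧
      Pot (p (i - 1)) - Pot (p i) = β i * f i * |f i| ∧
      Pot (p' (i - 1)) - Pot (p' i) = β i * f' i * |f' i|)
    (hcomp : ∀ i, 1 ≤ i → i ≤ k → ¬ isPipe i →
      0 < α i ∧ p i = α i * p (i - 1) ∧ p' i = α i * p' (i - 1))
    (hex : ∃ i, 1 ≤ i ∧ i ≤ k ∧ isPipe i) :
    ¬ (∀ i, 1 ≤ i → i ≤ k → isPipe i → f' i < f i) := by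
  intro hf
  have hle : ∀ x ∈ D, ∀ y ∈ D, x ≤ y → Pot x ≤ Pot y := by
    intro x hx y hy hxy
    rcases hxy.eq_or_lt with h | h
    · rw [h]
    · exact (hmono x hx y hy h).le
  have key : ∀ i, i ≤ k → p i ≤ p' i ∧ ((∃ j, 1 ≤ j ∧ j ≤ i ∧ isPipe j) → p i < p' i) := by
    intro i
    induction i with
    | zero =>
      intro _
      refine ⟨hstart.le, ?_⟩
      rintro ⟨j, h1, h2, _⟩
      omega
    | succ n ih =>
      intro hn
      obtain ⟨ih1, ih2⟩ := ih (by omega)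
      by_cases hP : isPipe (n + 1)
      · obtain ⟨hb, e1, e2⟩ := hpipe (n + 1) (by omega) hn hP
        simp only [Nat.add_sub_cancel] at e1 e2
        have h1 := mul_lt_mul_of_pos_left (mul_abs_lt_aux (hf (n + 1) (by omega) hn hP)) hb
        have h2 := hle _ (hpD n (by omega)) _ (hp'D n (by omega)) ih1
        have h3 : p (n + 1) < p' (n + 1) := by
          by_contra hc
          have h4 := hle _ (hp'D _ hn) _ (hpD _ hn) (not_lt.mp hc)
          linarith
        exact ⟨h3.le, fun _ => h3⟩
      · obtain ⟨ha, e1, e2⟩ := hcomp (n + 1) (by omega) hn hP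
        simp only [Nat.add_sub_cancel] at e1 e2
        rw [e1, e2]
        refine ⟨mul_le_mul_of_nonneg_left ih1 ha.le, ?_⟩
        rintro ⟨j, hj1, hj2, hj⟩
        refine mul_lt_mul_of_pos_left (ih2 ⟨j, hj1, ?_, hj⟩) ha
        have : j ≠ n + 1 := by
          rintro rfl
          exact hP hj
        omega
  exact absurd hend ((key k le_rfl).2 hex).ne

/-- Along a path of `k ≥ 1` edges with fixed end pressures, containing at least one
pipe, two pressure/flow profiles satisfying the same pipe equations
`Π(p_{i-1}) - Π(p_i) = β_i f_i |f_i|` (with `β_i > 0`) and compressor equations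
`p_i = α_i p_{i-1}` (with `α_i > 0`), with all pressures in a set `D` on which the
potential `Pot` is strictly increasing and with equal endpoint pressures, cannot have
`f_i > f'_i` on every pipe, nor `f_i < f'_i` on every pipe. -/
theorem path_flows_cannot_all_increase
    (k : ℕ) (hk : 1 ≤ k)
    (Pot : ℝ → ℝ) (D : Set ℝ)
    (hmono : ∀ x ∈ D, ∀ y ∈ D, x < y → Pot x < Pot y)
    (isPipe : ℕ → Prop)
    (p p' β f f' α : ℕ → ℝ)
    (hpD : ∀ i ≤ k, p i ∈ D) (hp'D : ∀ i ≤ k, p' i ∈ D)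
    (hstart : p 0 = p' 0) (hend : p k = p' k)
    (hpipe : ∀ i, 1 ≤ i → i ≤ k → isPipe i →
      0 < β i ∧
      Pot (p (i - 1)) - Pot (p i) = β i * f i * |f i| ∧
      Pot (p' (i - 1)) - Pot (p' i) = β i * f' i * |f' i|)
    (hcomp : ∀ i, 1 ≤ i → i ≤ k → ¬ isPipe i →
      0 < α i ∧ p i = α i * p (i - 1) ∧ p' i = α i * p' (i - 1))
    (hex : ∃ i, 1 ≤ i ∧ i ≤ k ∧ isPipe i) :
    ¬ (∀ i, 1 ≤ i → i ≤ k → isPipe i → f' i < f i) ∧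
    ¬ (∀ i, 1 ≤ i → i ≤ k → isPipe i → f i < f' i) := by
  refine ⟨path_aux k Pot D hmono isPipe p p' β f f' α hpD hp'D hstart hend hpipe hcomp hex,
    path_aux k Pot D hmono isPipe p' p β f' f α hp'D hpD hstart.symm hend.symm ?_ ?_ hex⟩
  · intro i h1 h2 h3
    obtain ⟨a, b, c⟩ := hpipe i h1 h2 h3
    exact ⟨a, c, b⟩
  · intro i h1 h2 h3
    obtain ⟨a, b, c⟩ := hcomp i h1 h2 h3
    exact ⟨a, c, b⟩
end

section
/- Let G = (V, E) be a finite directed multigraph with source and target maps s, t : E → V, let f : E → ℝ be edge flows, and let q : V → ℝ be nodal injections satisfying flow conservation at every node: for all i ∈ V, ∑_{e : s(e)=i} f(e) − ∑_{e : t(e)=i} f(e) = q(i). If q is not identically zero, then there exist nodes m and n with q(m) > 0 and q(n) < 0, and a simple path from m to n along which all flows are directed from m toward n: that is, there exist pairwise distinct vertices v_0 = m, v_1, …, v_r = n (r ≥ 1) and edges e_1, …, e_r such that for each j, either s(e_j) = v_{j−1}, t(e_j) = v_j, and f(e_j) > 0, or s(e_j) = v_j, t(e_j) = v_{j−1}, and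 f(e_j) < 0. -/
/-- Reachability yields an injective chain. -/
theorem exists_simple_chain {V : Type*} (R : V → V → Prop) (m n : V)
    (h : Relation.ReflTransGen R m n) :
    ∃ (r : ℕ) (v : ℕ → V), v 0 = m ∧ v r = n ∧ (∀ j < r, R (v j) (v (j+1))) ∧
      ∀ i j, i < j → j ≤ r → v i ≠ v j := by
  classical
  have hex : ∃ r : ℕ, ∃ v : ℕ → V, v 0 = m ∧ v r = n ∧ ∀ j < r, R (v j) (v (j+1)) := by
    induction h with
    | refl => exact ⟨0, fun _ => m, rfl, rfl, by simp⟩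
    | @tail b c _ hbc ih =>
      obtain ⟨r, v, h0, hr, hR⟩ := ih
      refine ⟨r+1, fun k => if k ≤ r then v k else c, by simp [h0], by simp, ?_⟩
      intro j hj
      rcases Nat.lt_succ_iff_lt_or_eq.mp hj with h | h
      · have h1 : j ≤ r := by omega
        have h2 : j + 1 ≤ r := by omega
        simpa [h1, h2] using hR j h
      · subst h
        simpa [hr] using hbc
  obtain ⟨v, h0, hr, hR⟩ := Nat.find_spec hex
  refine ⟨Nat.find hex, v, h0, hr, hR, ?_⟩
  intro i j hij hj hv
  have hlt : Nat.find hex - (j - i) < Nat.find hex := by omega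
  refine Nat.find_min hex hlt ⟨fun k => if k ≤ i then v k else v (k + (j - i)), by simp [h0], ?_, ?_⟩
  · by_cases hc : Nat.find hex - (j - i) ≤ i
    · have e1 : Nat.find hex - (j - i) = i := by omega
      have e2 : j = Nat.find hex := by omega
      simp only [hc, if_true]
      rw [e1, hv, ← hr]
      exact congrArg v e2
    · simp only [hc, if_false]
      refine Eq.trans (congrArg v ?_) hr
      omega
  · intro k hk
    rcases lt_trichotomy k i with h | h | h
    · have h1 : k ≤ i := by omega
      have h2 : k + 1 ≤ i := by omega
      simpa [h1, h2] using hR k (by omega)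
    · subst h
      have e : k + 1 + (j - k) = j + 1 := by omega
      simp only [le_refl, if_true, Nat.not_succ_le_self, if_false, e]
      rw [hv]
      exact hR j (by omega)
    · have h1 : ¬ k ≤ i := by omega
      have h2 : ¬ k + 1 ≤ i := by omega
      have e : k + 1 + (j - i) = k + (j - i) + 1 := by omega
      simp only [h1, h2, if_false, e]
      exact hR _ (by omega)

/-- On a finite directed multigraph with edge flows `f` and nodal injections `q`
satisfying flow conservation (net outflow equals `q i` at every node `i`), if `q`
is not identically zero then there exist an injection node `m` (`q m > 0`), a
withdrawal node `n` (`q n < 0`), and a simple (non-intersecting) path from `m` to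
`n` along which every edge carries flow directed from `m` toward `n`: an edge is
traversed forwards with positive flow, or backwards with negative flow. -/
theorem exists_directed_flow_path
    {V E : Type*} [Fintype V] [Fintype E] [DecidableEq V]
    (sV tV : E → V) (f : E → ℝ) (q : V → ℝ)
    (hcons : ∀ i : V,
      (∑ e : E, if sV e = i then f e else 0) -
        (∑ e : E, if tV e = i then f e else 0) = q i)
    (hq : q ≠ 0) :
    ∃ (m n : V) (r : ℕ) (v : Fin (r + 1) → V) (e : Fin r → E),
      0 < q m ∧ q n < 0 ∧ 1 ≤ r ∧ Function.Injective v ∧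
      v 0 = m ∧ v (Fin.last r) = n ∧
      ∀ j : Fin r,
        (sV (e j) = v j.castSucc ∧ tV (e j) = v j.succ ∧ 0 < f (e j)) ∨
        (sV (e j) = v j.succ ∧ tV (e j) = v j.castSucc ∧ f (e j) < 0) := by
  classical
  have key : ∀ S : Finset V, ∑ i ∈ S, q i =
      ∑ e : E, ((if sV e ∈ S then f e else 0) - (if tV e ∈ S then f e else 0)) := by
    intro S
    simp_rw [← hcons]
    rw [Finset.sum_sub_distrib, Finset.sum_sub_distrib, Finset.sum_comm]
    congr 1
    · simp
    · rw [Finset.sum_comm]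
      simp
  have hm : ∃ m, 0 < q m := by
    by_contra! hneg
    have h0 : ∑ i, q i = 0 := by rw [key]; simp
    have := (Finset.sum_eq_zero_iff_of_nonpos (fun i _ => hneg i)).mp h0
    exact hq (funext fun i => this i (Finset.mem_univ i))
  obtain ⟨m, hm⟩ := hm
  let R : V → V → Prop := fun a b => ∃ e, (sV e = a ∧ tV e = b ∧ 0 < f e) ∨
    (sV e = b ∧ tV e = a ∧ f e < 0)
  have hn : ∃ n, Relation.ReflTransGen R m n ∧ q n < 0 := by
    by_contra! hpos
    let S : Finset V := Finset.univ.filter (fun n => Relation.ReflTransGen R m n)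
    have hS : ∀ x, x ∈ S ↔ Relation.ReflTransGen R m x := by simp [S]
    have h1 : 0 < ∑ i ∈ S, q i :=
      Finset.sum_pos' (fun i hi => hpos i ((hS i).1 hi)) ⟨m, (hS m).2 .refl, hm⟩
    rw [key] at h1
    refine absurd h1 (not_lt.mpr (Finset.sum_nonpos fun e _ => ?_))
    by_cases ha : sV e ∈ S <;> by_cases hb : tV e ∈ S
    · simp [ha, hb]
    · simp only [ha, hb, if_true, if_false, sub_zero]
      by_contra! hf
      exact hb ((hS _).2 (((hS _).1 ha).tail ⟨e, .inl ⟨rfl, rfl, hf⟩⟩))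
    · simp only [ha, hb, if_true, if_false, zero_sub]
      by_contra! hf
      exact ha ((hS _).2 (((hS _).1 hb).tail ⟨e, .inr ⟨rfl, rfl, by linarith⟩⟩))
    · simp [ha, hb]
  obtain ⟨n, hreach, hn⟩ := hn
  obtain ⟨r, v, h0, hr, hR, hinj⟩ := exists_simple_chain R m n hreach
  have hE : ∀ j : Fin r, R (v j) (v (j + 1)) := fun j => hR j j.2
  choose e he using hE
  refine ⟨m, n, r, fun k => v k, e, hm, hn, ?_, ?_, by simpa using h0, by simpa using hr, ?_⟩
  · rcases Nat.eq_zero_or_pos r with h | h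
    · subst h
      rw [← hr, h0] at hn
      linarith
    · exact h
  · intro a b hab
    rcases lt_trichotomy a b with h | h | h
    · exact absurd hab (hinj a b h (by omega))
    · exact h
    · exact absurd hab.symm (hinj b a h (by omega))
  · intro j
    simpa using he j
end

section
/- Let b₁ > 0 and b₂ > 0 and define the CNGA potential Π(p) = (b₁/2)·p² + (b₂/3)·p³. Then Π is strictly increasing on the set S₁ = {p ∈ ℝ : p ≤ −3b₁/(2b₂)} ∪ {p ∈ ℝ : p > 0}: for all p, p̂ ∈ S₁ with p < p̂, one has Π(p) < Π(p̂). -/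
/-- The CNGA potential `Π(p) = (b₁/2)p² + (b₂/3)p³` (with `b₁, b₂ > 0`) is strictly
increasing on the set `S₁ = {p : p ≤ -3b₁/(2b₂)} ∪ {p : p > 0}`. -/
theorem cnga_potential_strictMono_on_S1
    (b₁ b₂ : ℝ) (hb₁ : 0 < b₁) (hb₂ : 0 < b₂) :
    ∀ p ∈ {p : ℝ | p ≤ -(3 * b₁) / (2 * b₂)} ∪ {p : ℝ | 0 < p},
      ∀ p' ∈ {p : ℝ | p ≤ -(3 * b₁) / (2 * b₂)} ∪ {p : ℝ | 0 < p},
        p < p' →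
          b₁ / 2 * p ^ 2 + b₂ / 3 * p ^ 3 < b₁ / 2 * p' ^ 2 + b₂ / 3 * p' ^ 3 := by
  have key : ∀ p : ℝ, p ≤ -(3 * b₁) / (2 * b₂) → p < 0 ∧ b₁ / 2 + b₂ / 3 * p ≤ 0 := by
    intro p hp
    rw [le_div_iff₀ (by positivity)] at hp
    refine ⟨?_, by linarith⟩
    by_contra h
    have := mul_nonneg (not_lt.mp h) hb₂.le
    linarith
  have lower : ∀ p : ℝ, p < 0 → b₁ / 2 + b₂ / 3 * p ≤ 0 →
      0 ≤ p * (b₁ / 2 + b₂ / 3 * p) := fun p h1 h2 => mul_nonneg_of_nonpos_of_nonpos h1.le h2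
  rintro p hp q hq hpq
  rcases hp with hp | hp <;> rcases hq with hq | hq
  · obtain ⟨p0, hp1⟩ := key p hp
    obtain ⟨q0, hq1⟩ := key q hq
    have h1 := lower p p0 hp1
    have h2 := lower q q0 hq1
    have h3 : 0 < b₂ / 3 * (p * q) := mul_pos (by positivity) (mul_pos_of_neg_of_neg p0 q0)
    have h4 := mul_pos (sub_pos.mpr hpq)
      (add_pos_of_nonneg_of_pos (add_nonneg h1 h2) h3)
    linarith
  · obtain ⟨p0, hp1⟩ := key p hp
    have h1 := mul_nonpos_of_nonneg_of_nonpos (sq_nonneg p) hp1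
    have hq' : 0 < q := hq
    have h2 : 0 < b₁ / 2 * q ^ 2 + b₂ / 3 * q ^ 3 := by positivity
    linarith
  · have hp' : 0 < p := hp
    linarith [(key q hq).1]
  · have hp' : 0 < p := hp
    have hq' : 0 < q := hq
    gcongr
end

section
/- Let b₁ > 0 and b₂ > 0 and define the CNGA potential Π(p) = (b₁/2)·p² + (b₂/3)·p³. Then Π is strictly increasing on the set S₂ = {p ∈ ℝ : p ≤ −b₁/b₂} ∪ {p ∈ ℝ : p > b₁/(2b₂)}: for all p, p̂ ∈ S₂ with p < p̂, one has Π(p) < Π(p̂). -/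
/-- The CNGA potential `Π(p) = (b₁/2)p² + (b₂/3)p³` (with `b₁, b₂ > 0`) is strictly
increasing on the set `S₂ = {p : p ≤ -b₁/b₂} ∪ {p : p > b₁/(2b₂)}`. -/
theorem cnga_potential_strictMono_on_S2
    (b₁ b₂ : ℝ) (hb₁ : 0 < b₁) (hb₂ : 0 < b₂) :
    ∀ p ∈ {p : ℝ | p ≤ -b₁ / b₂} ∪ {p : ℝ | b₁ / (2 * b₂) < p},
      ∀ p' ∈ {p : ℝ | p ≤ -b₁ / b₂} ∪ {p : ℝ | b₁ / (2 * b₂) < p},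
        p < p' →
          b₁ / 2 * p ^ 2 + b₂ / 3 * p ^ 3 < b₁ / 2 * p' ^ 2 + b₂ / 3 * p' ^ 3 := by
  intro p hp q hq hpq
  obtain ⟨c, hc, rfl⟩ : ∃ c : ℝ, 0 < c ∧ b₁ = c * b₂ :=
    ⟨b₁ / b₂, div_pos hb₁ hb₂, by field_simp⟩
  have e1 : -(c * b₂) / b₂ = -c := by field_simp
  have e2 : c * b₂ / (2 * b₂) = c / 2 := by field_simp
  simp only [Set.mem_union, Set.mem_setOf_eq, e1, e2] at hp hq
  have key : 3 * c * p ^ 2 + 2 * p ^ 3 < 3 * c * q ^ 2 + 2 * q ^ 3 := by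
    have hd : 0 < q - p := sub_pos.2 hpq
    rcases hp with hp | hp <;> rcases hq with hq | hq
    · have hu : 0 < -c - p := by linarith
      have hv : 0 ≤ -c - q := by linarith
      have hE : 0 < 3 * c * ((-c - p) + (-c - q)) +
          2 * ((-c - p) ^ 2 + (-c - p) * (-c - q) + (-c - q) ^ 2) := by positivity
      have := mul_pos hd hE
      linarith
    · have h1 : 0 ≤ (p + c) ^ 2 * (c - 2 * p) :=
        mul_nonneg (sq_nonneg _) (by linarith)
      have h2 : 0 < (q + c) ^ 2 * (2 * q - c) :=
        mul_pos (pow_pos (by linarith) 2) (by linarith)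
      linarith
    · linarith
    · have hp0 : 0 < p := by linarith
      have hq0 : 0 < q := by linarith
      have hE : 0 < 3 * c * (p + q) + 2 * (p ^ 2 + p * q + q ^ 2) := by positivity
      have := mul_pos hd hE
      linarith
  have := mul_lt_mul_of_pos_left key hb₂
  linarith
end
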